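/- arXiv:0911.3788 — 3 statements merged into one kernel-verified Lean document; each statement's English description precedes it below -/
import Mathlib

section
/- Anderson's lemma (convex sets): if C and K are symmetric convex Borel subsets of ℝ^d, then for all x ∈ ℝ^d, the Lebesgue measure of (C − x) ∩ K is at most the Lebesgue measure of C ∩ K. -/
open MeasureTheory

/-!
Put `A = (C - x) ∩ K`. By symmetry `-A = (C + x) ∩ K`, so convexity puts every midpoint of a point
of `A` and a point of `-A` in `C ∩ K`. Since `|-A| = |A|`, the multiplicative Brunn–Minkowski
inequality `|A|^p |B|^q ≤ |p A + q B|` with `B = -A` and `p = q = 1/2` gives the claim.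

Brunn–Minkowski is the Prékopa–Leindler inequality for indicator functions. The functional form
passes to products by applying it first to the slices and then to their integrals, which reduces
it to the real line. There, after normalising both suprema to be `1`, it follows by integrating
the bound `p |{f > t}| + q |{g > t}| ≤ |{h > t}|` over `t`. This bound is the inequality
`|A| + |B| ≤ |A + B|` for nonempty sets, which holds for compact ones because `A + B` contains a
translate of `A` to the left of `sup A + inf B` and a translate of `B` to the right.
-/

section

open scoped ENNReal Pointwise

theorem volume_add_volume_le_volume_add_of_isCompact {A B : Set ℝ}
    (hA : IsCompact A) (hB : IsCompact B) (hA₀ : A.Nonempty) (hB₀ : B.Nonempty) :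
    volume A + volume B ≤ volume (A + B) := by
  set a := sSup A
  set b := sInf B
  have hleft : b +ᵥ A ⊆ (A + B) ∩ Set.Iic (a + b) := by
    rintro _ ⟨x, hx, rfl⟩
    refine ⟨⟨x, hx, b, hB.sInf_mem hB₀, add_comm x b⟩, ?_⟩
    have hxa : x ≤ a := le_csSup hA.bddAbove hx
    change b + x ≤ a + b
    linarith
  have hright : a +ᵥ B ⊆ (A + B) ∩ Set.Ici (a + b) := by
    rintro _ ⟨y, hy, rfl⟩
    exact ⟨⟨a, hA.sSup_mem hA₀, y, hy, rfl⟩, add_le_add_right (csInf_le hB.bddBelow hy) a⟩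
  have hIci : volume ((A + B) ∩ Set.Ici (a + b)) = volume ((A + B) \ Set.Iic (a + b)) := by
    rw [Set.sdiff_eq, Set.compl_Iic]
    exact measure_congr ((ae_eq_refl _).inter Ioi_ae_eq_Ici.symm)
  calc volume A + volume B
      = volume (b +ᵥ A) + volume (a +ᵥ B) := by rw [measure_vadd, measure_vadd]
    _ ≤ volume ((A + B) ∩ Set.Iic (a + b)) + volume ((A + B) \ Set.Iic (a + b)) :=
        add_le_add (measure_mono hleft) ((measure_mono hright).trans_eq hIci)
    _ = volume (A + B) := measure_inter_add_sdiff _ measurableSet_Iic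

theorem volume_add_volume_le_volume_add {A B : Set ℝ} (hA : MeasurableSet A)
    (hB : MeasurableSet B) (hA₀ : A.Nonempty) (hB₀ : B.Nonempty) :
    volume A + volume B ≤ volume (A + B) := by
  obtain ⟨a, ha⟩ := hA₀
  obtain ⟨b, hb⟩ := hB₀
  rw [hA.measure_eq_iSup_isCompact, hB.measure_eq_iSup_isCompact]
  simp only [iSup_and']
  refine ENNReal.biSup_add_biSup_le' (p := fun K => K ⊆ A ∧ IsCompact K)
    (q := fun L => L ⊆ B ∧ IsCompact L) ⟨∅, by simp⟩ ⟨∅, by simp⟩ ?_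
  rintro K ⟨hKA, hK⟩ L ⟨hLB, hL⟩
  calc volume K + volume L
      ≤ volume (insert a K) + volume (insert b L) := by
        gcongr <;> exact Set.subset_insert _ _
    _ ≤ volume (insert a K + insert b L) :=
        volume_add_volume_le_volume_add_of_isCompact (hK.insert a) (hL.insert b)
          (Set.insert_nonempty _ _) (Set.insert_nonempty _ _)
    _ ≤ volume (A + B) := by
        gcongr
        · exact Set.insert_subset ha hKA
        · exact Set.insert_subset hb hLB

theorem ofReal_mul_volume_add_le_volume_smul_add_smul {A B : Set ℝ} (hA : MeasurableSet A)
    (hB : MeasurableSet B) (hA₀ : A.Nonempty) (hB₀ : B.Nonempty) {p q : ℝ} (hp : 0 < p)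
    (hq : 0 < q) :
    ENNReal.ofReal p * volume A + ENNReal.ofReal q * volume B ≤ volume (p • A + q • B) := by
  have hscale {r : ℝ} (hr : 0 < r) (S : Set ℝ) : volume (r • S) = ENNReal.ofReal r * volume S := by
    simp [Measure.addHaar_smul_of_nonneg volume hr.le S]
  rw [← hscale hp, ← hscale hq]
  exact volume_add_volume_le_volume_add (hA.const_smul₀ p) (hB.const_smul₀ q)
    hA₀.smul_set hB₀.smul_set

theorem volume_restrict_Ioi_setOf_ofReal_lt (a : ℝ≥0∞) :
    volume.restrict (Set.Ioi 0) {t : ℝ | ENNReal.ofReal t < a} = a := by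
  rw [Measure.restrict_apply (measurableSet_lt (by fun_prop) measurable_const)]
  induction a with
  | top => simp
  | coe a =>
    have hIoo : {t : ℝ | ENNReal.ofReal t < a} ∩ Set.Ioi 0 = Set.Ioo 0 (a : ℝ) := by
      ext t
      simp only [← ENNReal.ofReal_coe_nnreal, ENNReal.ofReal_lt_ofReal_iff', Set.mem_inter_iff,
        Set.mem_ofPred_eq, Set.mem_Ioi, Set.mem_Ioo]
      grind
    rw [hIoo]
    simp

theorem lintegral_eq_lintegral_measure_ofReal_lt {α : Type*} [MeasurableSpace α] (μ : Measure α)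
    [SFinite μ] {f : α → ℝ≥0∞} (hf : Measurable f) :
    ∫⁻ x, f x ∂μ = ∫⁻ t in Set.Ioi (0 : ℝ), μ {x | ENNReal.ofReal t < f x} := by
  have hS : MeasurableSet {z : ℝ × α | ENNReal.ofReal z.1 < f z.2} :=
    measurableSet_lt (by fun_prop) (by fun_prop)
  calc ∫⁻ x, f x ∂μ
      = ∫⁻ x, volume.restrict (Set.Ioi 0) {t : ℝ | ENNReal.ofReal t < f x} ∂μ := by
        simp only [volume_restrict_Ioi_setOf_ofReal_lt]
    _ = ((volume.restrict (Set.Ioi (0 : ℝ))).prod μ) {z | ENNReal.ofReal z.1 < f z.2} :=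
        (Measure.prod_apply_symm hS).symm
    _ = ∫⁻ t in Set.Ioi (0 : ℝ), μ {x | ENNReal.ofReal t < f x} := Measure.prod_apply hS

theorem lintegral_eq_iSup_lintegral_min_natCast {α : Type*} [MeasurableSpace α] (μ : Measure α)
    {f : α → ℝ≥0∞} (hf : Measurable f) :
    ∫⁻ x, f x ∂μ = ⨆ n : ℕ, ∫⁻ x, min (f x) n ∂μ := by
  rw [← lintegral_iSup (fun n => hf.min measurable_const)
    fun m n hmn x => min_le_min_left _ (Nat.cast_le.mpr hmn)]
  refine lintegral_congr fun x => ?_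
  rw [← inf_iSup_eq, ENNReal.iSup_natCast, inf_top_eq]

theorem ennreal_rpow_mul_rpow_le_add {p q : ℝ} (hp : 0 < p) (hq : 0 < q) (hpq : p + q = 1)
    (a b : ℝ≥0∞) : a ^ p * b ^ q ≤ ENNReal.ofReal p * a + ENNReal.ofReal q * b := by
  have := ENNReal.young_inequality (a ^ p) (b ^ q) (Real.HolderConjugate.inv_inv hp hq hpq)
  rwa [ENNReal.rpow_rpow_inv hp.ne', ENNReal.rpow_rpow_inv hq.ne', ENNReal.ofReal_inv_of_pos hp,
    ENNReal.ofReal_inv_of_pos hq, ENNReal.div_eq_inv_mul, inv_inv, ENNReal.div_eq_inv_mul,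
    inv_inv] at this

theorem smul_setOf_lt_add_smul_setOf_lt_subset {E : Type*} [Add E] [SMul ℝ E] {p q : ℝ}
    (hp : 0 < p) (hq : 0 < q) (hpq : p + q = 1) {f g h : E → ℝ≥0∞}
    (hfgh : ∀ x y, f x ^ p * g y ^ q ≤ h (p • x + q • y)) (t : ℝ≥0∞) :
    p • {x | t < f x} + q • {x | t < g x} ⊆ {x | t < h x} := by
  rintro _ ⟨_, ⟨x, hx, rfl⟩, _, ⟨y, hy, rfl⟩, rfl⟩
  calc t = t ^ p * t ^ q := by
        rw [← ENNReal.rpow_add_of_nonneg _ _ hp.le hq.le, hpq, ENNReal.rpow_one]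
    _ < f x ^ p * g y ^ q :=
        ENNReal.mul_lt_mul (ENNReal.rpow_lt_rpow hx hp) (ENNReal.rpow_lt_rpow hy hq)
    _ ≤ h (p • x + q • y) := hfgh x y

/-- The measure `μ` satisfies the Prékopa–Leindler inequality, the functional form of
Brunn–Minkowski that is stable under products. The usual `1 - λ` and `λ` are the weights `p` and
`q`, and `h` is required to be measurable since `∫⁻` is a lower integral. -/
def IsPrekopaLeindler {E : Type*} [AddCommMonoid E] [Module ℝ E] [MeasurableSpace E]
    (μ : Measure E) : Prop :=
  ∀ ⦃p q : ℝ⦄, 0 < p → 0 < q → p + q = 1 →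
    ∀ ⦃f g h : E → ℝ≥0∞⦄, Measurable f → Measurable g → Measurable h →
      (∀ x y, f x ^ p * g y ^ q ≤ h (p • x + q • y)) →
        (∫⁻ x, f x ∂μ) ^ p * (∫⁻ x, g x ∂μ) ^ q ≤ ∫⁻ x, h x ∂μ

section Line

variable {p q : ℝ} {f g h : ℝ → ℝ≥0∞}

theorem ofReal_mul_lintegral_add_le_lintegral_of_iSup_eq_one (hp : 0 < p) (hq : 0 < q)
    (hpq : p + q = 1) (hf : Measurable f) (hg : Measurable g) (hh : Measurable h)
    (hf₁ : ⨆ x, f x = 1) (hg₁ : ⨆ x, g x = 1)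
    (hfgh : ∀ x y, f x ^ p * g y ^ q ≤ h (p • x + q • y)) :
    ENNReal.ofReal p * (∫⁻ x, f x) + ENNReal.ofReal q * (∫⁻ x, g x) ≤ ∫⁻ x, h x := by
  have hmeas (u : ℝ → ℝ≥0∞) : Measurable fun t => volume {x | ENNReal.ofReal t < u x} :=
    Antitone.measurable fun s t hst =>
      measure_mono fun x hx => (ENNReal.ofReal_le_ofReal hst).trans_lt hx
  rw [lintegral_eq_lintegral_measure_ofReal_lt volume hf,
    lintegral_eq_lintegral_measure_ofReal_lt volume hg,
    lintegral_eq_lintegral_measure_ofReal_lt volume hh,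
    ← lintegral_const_mul _ (hmeas f), ← lintegral_const_mul _ (hmeas g),
    ← lintegral_add_left ((hmeas f).const_mul _)]
  refine lintegral_mono fun t => ?_
  have hempty {u : ℝ → ℝ≥0∞} (hu : ⨆ x, u x = 1) (ht : 1 ≤ ENNReal.ofReal t) :
      {x | ENNReal.ofReal t < u x} = ∅ :=
    Set.eq_empty_of_forall_notMem fun x => not_lt.mpr ((le_iSup u x).trans (hu.trans_le ht))
  rcases lt_or_ge (ENNReal.ofReal t) 1 with ht | ht
  · calc _ ≤ volume (p • {x | ENNReal.ofReal t < f x} + q • {x | ENNReal.ofReal t < g x}) :=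
          ofReal_mul_volume_add_le_volume_smul_add_smul (measurableSet_lt measurable_const hf)
            (measurableSet_lt measurable_const hg) (lt_iSup_iff.mp (ht.trans_eq hf₁.symm))
            (lt_iSup_iff.mp (ht.trans_eq hg₁.symm)) hp hq
      _ ≤ volume {x | ENNReal.ofReal t < h x} :=
          measure_mono (smul_setOf_lt_add_smul_setOf_lt_subset hp hq hpq hfgh _)
  · simp [hempty hf₁ ht, hempty hg₁ ht]

theorem lintegral_rpow_mul_lintegral_rpow_le_of_iSup_ne_top (hp : 0 < p) (hq : 0 < q)
    (hpq : p + q = 1) (hf : Measurable f) (hg : Measurable g) (hh : Measurable h)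
    (hf_top : ⨆ x, f x ≠ ∞) (hg_top : ⨆ x, g x ≠ ∞)
    (hfgh : ∀ x y, f x ^ p * g y ^ q ≤ h (p • x + q • y)) :
    (∫⁻ x, f x) ^ p * (∫⁻ x, g x) ^ q ≤ ∫⁻ x, h x := by
  set F := ⨆ x, f x
  set G := ⨆ x, g x
  rcases eq_or_ne F 0 with hF₀ | hF₀
  · simp [ENNReal.iSup_eq_zero.mp hF₀, hp]
  rcases eq_or_ne G 0 with hG₀ | hG₀
  · simp [ENNReal.iSup_eq_zero.mp hG₀, hq]
  set c := F ^ p * G ^ q with hc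
  have hc₀ : c ≠ 0 := by simp [hc, hF₀, hG₀, hp.le, hq.le]
  have hc_top : c ≠ ∞ := by finiteness
  have hscale (a b : ℝ≥0∞) : a ^ p * b ^ q = c * ((F⁻¹ * a) ^ p * (G⁻¹ * b) ^ q) := by
    rw [hc, mul_mul_mul_comm, ← ENNReal.mul_rpow_of_nonneg _ _ hp.le,
      ← ENNReal.mul_rpow_of_nonneg _ _ hq.le, ENNReal.mul_inv_cancel_left hF₀ hf_top,
      ENNReal.mul_inv_cancel_left hG₀ hg_top]
  calc (∫⁻ x, f x) ^ p * (∫⁻ x, g x) ^ q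
      = c * ((∫⁻ x, F⁻¹ * f x) ^ p * (∫⁻ x, G⁻¹ * g x) ^ q) := by
        rw [lintegral_const_mul _ hf, lintegral_const_mul _ hg, hscale]
    _ ≤ c * (ENNReal.ofReal p * (∫⁻ x, F⁻¹ * f x) + ENNReal.ofReal q * (∫⁻ x, G⁻¹ * g x)) := by
        gcongr c * ?_
        exact ennreal_rpow_mul_rpow_le_add hp hq hpq _ _
    _ ≤ c * ∫⁻ x, c⁻¹ * h x := by
        gcongr c * ?_
        refine ofReal_mul_lintegral_add_le_lintegral_of_iSup_eq_one hp hq hpq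
          (hf.const_mul F⁻¹) (hg.const_mul G⁻¹) (hh.const_mul c⁻¹) ?_ ?_ fun x y => ?_
        · rw [← ENNReal.mul_iSup, ENNReal.inv_mul_cancel hF₀ hf_top]
        · rw [← ENNReal.mul_iSup, ENNReal.inv_mul_cancel hG₀ hg_top]
        · rw [← ENNReal.mul_le_iff_le_inv hc₀ hc_top, ← hscale]
          exact hfgh x y
    _ = ∫⁻ x, h x := by
        rw [lintegral_const_mul _ hh, ENNReal.mul_inv_cancel_left hc₀ hc_top]

theorem IsPrekopaLeindler.volume_real : IsPrekopaLeindler (volume : Measure ℝ) := by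
  intro p q hp hq hpq f g h hf hg hh hfgh
  have hrpow {r : ℝ} (hr : 0 < r) {u : ℝ → ℝ≥0∞} (hu : Measurable u) :
      (∫⁻ x, u x) ^ r = ⨆ n : ℕ, (∫⁻ x, min (u x) n) ^ r := by
    rw [lintegral_eq_iSup_lintegral_min_natCast volume hu]
    exact (ENNReal.orderIsoRpow r hr).map_iSup _
  have hbdd (u : ℝ → ℝ≥0∞) (n : ℕ) : ⨆ x, min (u x) n ≠ ∞ :=
    ne_top_of_le_ne_top (ENNReal.natCast_ne_top n) (iSup_le fun x => min_le_right _ _)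
  simp only [hrpow hp hf, hrpow hq hg, ENNReal.iSup_mul, ENNReal.mul_iSup]
  refine iSup₂_le fun m n => lintegral_rpow_mul_lintegral_rpow_le_of_iSup_ne_top hp hq hpq
    (hf.min measurable_const) (hg.min measurable_const) hh (hbdd f _) (hbdd g _) fun x y => ?_
  refine le_trans ?_ (hfgh x y)
  gcongr <;> exact min_le_left _ _

end Line

namespace IsPrekopaLeindler

section Constructions

variable {E F : Type*} [AddCommMonoid E] [Module ℝ E] [MeasurableSpace E]
  [AddCommMonoid F] [Module ℝ F] [MeasurableSpace F] {μ : Measure E} {ν : Measure F}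

theorem dirac (a : E) : IsPrekopaLeindler (Measure.dirac a) := by
  intro p q _ _ hpq f g h hf hg hh hfgh
  simpa only [lintegral_dirac' a, hf, hg, hh, Convex.combo_self hpq] using hfgh a a

theorem smul (hμ : IsPrekopaLeindler μ) (c : ℝ≥0∞) : IsPrekopaLeindler (c • μ) := by
  intro p q hp hq hpq f g h hf hg hh hfgh
  simp only [lintegral_smul_measure, smul_eq_mul]
  calc (c * ∫⁻ x, f x ∂μ) ^ p * (c * ∫⁻ x, g x ∂μ) ^ q
      = c * ((∫⁻ x, f x ∂μ) ^ p * (∫⁻ x, g x ∂μ) ^ q) := by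
        rw [ENNReal.mul_rpow_of_nonneg _ _ hp.le, ENNReal.mul_rpow_of_nonneg _ _ hq.le,
          mul_mul_mul_comm, ← ENNReal.rpow_add_of_nonneg _ _ hp.le hq.le, hpq, ENNReal.rpow_one]
    _ ≤ c * ∫⁻ x, h x ∂μ := by
        gcongr
        exact hμ hp hq hpq hf hg hh hfgh

theorem map (hμ : IsPrekopaLeindler μ) {T : E →ₗ[ℝ] F} (hT : Measurable T) :
    IsPrekopaLeindler (μ.map T) := by
  intro p q hp hq hpq f g h hf hg hh hfgh
  simp only [lintegral_map, hf, hg, hh, hT]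
  refine hμ hp hq hpq (hf.comp hT) (hg.comp hT) (hh.comp hT) fun x y => ?_
  simpa only [Function.comp_apply, map_add, map_smul] using hfgh (T x) (T y)

theorem prod [SFinite ν] (hμ : IsPrekopaLeindler μ) (hν : IsPrekopaLeindler ν) :
    IsPrekopaLeindler (μ.prod ν) := by
  intro p q hp hq hpq f g h hf hg hh hfgh
  rw [lintegral_prod f hf.aemeasurable, lintegral_prod g hg.aemeasurable,
    lintegral_prod h hh.aemeasurable]
  refine hμ hp hq hpq hf.lintegral_prod_right' hg.lintegral_prod_right' hh.lintegral_prod_right'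
    fun x₁ y₁ => ?_
  exact hν hp hq hpq (hf.comp measurable_prodMk_left) (hg.comp measurable_prodMk_left)
    (hh.comp measurable_prodMk_left) fun x₂ y₂ => hfgh (x₁, x₂) (y₁, y₂)

theorem measure_rpow_mul_measure_rpow_le (hμ : IsPrekopaLeindler μ) {p q : ℝ} (hp : 0 < p)
    (hq : 0 < q) (hpq : p + q = 1) {A B : Set E} (hA : NullMeasurableSet A μ)
    (hB : NullMeasurableSet B μ) :
    μ A ^ p * μ B ^ q ≤ μ (p • A + q • B) := by
  obtain ⟨A', hA'A, hA', hAA'⟩ := hA.exists_measurable_subset_ae_eq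
  obtain ⟨B', hB'B, hB', hBB'⟩ := hB.exists_measurable_subset_ae_eq
  -- The sum need not be measurable, so compare with the indicator of its measurable hull.
  set S := toMeasurable μ (p • A + q • B)
  have hS : MeasurableSet S := measurableSet_toMeasurable _ _
  rw [← measure_congr hAA', ← measure_congr hBB', ← measure_toMeasurable (p • A + q • B),
    ← lintegral_indicator_one hA', ← lintegral_indicator_one hB', ← lintegral_indicator_one hS]
  refine hμ hp hq hpq (measurable_one.indicator hA') (measurable_one.indicator hB')
    (measurable_one.indicator hS) fun x y => ?_
  by_cases hx : x ∈ A'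
  · by_cases hy : y ∈ B'
    · have hxy : p • x + q • y ∈ S := subset_toMeasurable _ _ <|
        Set.add_mem_add (Set.smul_mem_smul_set (hA'A hx)) (Set.smul_mem_smul_set (hB'B hy))
      simp [hx, hy, hxy]
    · simp [hy, hq]
  · simp [hx, hp]

theorem measure_le_measure_inv_two_smul_add_inv_two_smul_neg {E : Type*} [AddCommGroup E]
    [Module ℝ E] [MeasurableSpace E] [MeasurableNeg E] {μ : Measure E} [μ.IsNegInvariant]
    (hμ : IsPrekopaLeindler μ) {A : Set E} (hA : NullMeasurableSet A μ) :
    μ A ≤ μ ((2⁻¹ : ℝ) • A + (2⁻¹ : ℝ) • -A) := by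
  have hneg : NullMeasurableSet (-A) μ :=
    hA.preimage (Measure.measurePreserving_neg μ).quasiMeasurePreserving
  calc μ A = μ A ^ (2⁻¹ : ℝ) * μ (-A) ^ (2⁻¹ : ℝ) := by
        rw [Measure.measure_neg, ← ENNReal.rpow_add_of_nonneg _ _ (by norm_num) (by norm_num),
          ← two_mul, mul_inv_cancel₀ two_ne_zero, ENNReal.rpow_one]
    _ ≤ μ ((2⁻¹ : ℝ) • A + (2⁻¹ : ℝ) • -A) :=
        hμ.measure_rpow_mul_measure_rpow_le (by norm_num) (by norm_num) (by norm_num) hA hneg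

end Constructions

section Haar

variable {E F : Type*} [NormedAddCommGroup E] [NormedSpace ℝ E] [FiniteDimensional ℝ E]
  [MeasurableSpace E] [BorelSpace E] [NormedAddCommGroup F] [NormedSpace ℝ F]
  [MeasurableSpace F] [BorelSpace F]

theorem of_linearEquiv {μ : Measure E} [μ.IsAddHaarMeasure] (hμ : IsPrekopaLeindler μ)
    (e : E ≃ₗ[ℝ] F) (ν : Measure F) [ν.IsAddHaarMeasure] : IsPrekopaLeindler ν := by
  let e' : E ≃L[ℝ] F := e.toContinuousLinearEquiv
  have : FiniteDimensional ℝ F := e.finiteDimensional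
  have hmap : IsPrekopaLeindler (μ.map e') :=
    hμ.map (T := (e' : E →ₗ[ℝ] F)) e'.continuous.measurable
  rw [Measure.isAddLeftInvariant_eq_smul ν (μ.map e')]
  exact hmap.smul _

theorem volume_pi (n : ℕ) : IsPrekopaLeindler (volume : Measure (Fin n → ℝ)) := by
  induction n with
  | zero =>
    rw [Measure.volume_pi_eq_dirac]
    exact .dirac _
  | succ n ih =>
    have hprod : IsPrekopaLeindler ((volume : Measure ℝ).prod (volume : Measure (Fin n → ℝ))) :=
      volume_real.prod ih
    exact hprod.of_linearEquiv (Fin.consLinearEquiv ℝ fun _ => ℝ) _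

theorem of_isAddHaarMeasure (μ : Measure E) [μ.IsAddHaarMeasure] : IsPrekopaLeindler μ :=
  (volume_pi _).of_linearEquiv (Module.finBasis ℝ E).equivFun.symm μ

end Haar

end IsPrekopaLeindler

theorem inv_two_smul_add_inv_two_smul_neg_subset_inter {E : Type*} [AddCommGroup E] [Module ℝ E]
    {C K : Set E} (hC : Convex ℝ C) (hK : Convex ℝ K) (hC_symm : C = -C)
    (hK_symm : K = -K) (x : E) :
    (2⁻¹ : ℝ) • ((fun y => y + x) ⁻¹' C ∩ K) + (2⁻¹ : ℝ) • -((fun y => y + x) ⁻¹' C ∩ K) ⊆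
      C ∩ K := by
  rintro _ ⟨_, ⟨a, ⟨haC, haK⟩, rfl⟩, _, ⟨b, ⟨hbC, hbK⟩, rfl⟩, rfl⟩
  have hbC' : b - x ∈ C := by
    rw [hC_symm, Set.mem_neg, neg_sub']
    simpa using hbC
  have hbK' : b ∈ K := by rwa [hK_symm]
  have hmid : (2⁻¹ : ℝ) • a + (2⁻¹ : ℝ) • b = (2⁻¹ : ℝ) • (a + x) + (2⁻¹ : ℝ) • (b - x) := by
    module
  refine ⟨?_, hK haK hbK' (by norm_num) (by norm_num) (by norm_num)⟩
  change (2⁻¹ : ℝ) • a + (2⁻¹ : ℝ) • b ∈ C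
  rw [hmid]
  exact hC haC hbC' (by norm_num) (by norm_num) (by norm_num)

theorem stmt10_general {E : Type*} [NormedAddCommGroup E] [NormedSpace ℝ E]
    [FiniteDimensional ℝ E] [MeasurableSpace E] [BorelSpace E] (μ : Measure E)
    [μ.IsAddHaarMeasure] {C K : Set E} (hC : Convex ℝ C) (hK : Convex ℝ K) (hC_symm : C = -C)
    (hK_symm : K = -K) (x : E) :
    μ ((fun y => y + x) ⁻¹' C ∩ K) ≤ μ (C ∩ K) := by
  have hconv : Convex ℝ ((fun y => y + x) ⁻¹' C ∩ K) := (hC.translate_preimage_left x).inter hK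
  set A := (fun y => y + x) ⁻¹' C ∩ K
  calc μ A ≤ μ ((2⁻¹ : ℝ) • A + (2⁻¹ : ℝ) • -A) :=
        (IsPrekopaLeindler.of_isAddHaarMeasure μ)
          |>.measure_le_measure_inv_two_smul_add_inv_two_smul_neg (hconv.nullMeasurableSet μ)
    _ ≤ μ (C ∩ K) :=
        measure_mono (inv_two_smul_add_inv_two_smul_neg_subset_inter hC hK hC_symm hK_symm x)

end

/-- Anderson's lemma: if `C` and `K` are symmetric convex Borel subsets of `ℝᵈ`,
then `|(C - x) ∩ K| ≤ |C ∩ K|` for every `x`. -/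
theorem stmt10 {d : ℕ} (C K : Set (Fin d → ℝ))
    (hCconv : Convex ℝ C) (hKconv : Convex ℝ K)
    (hCsym : C = -C) (hKsym : K = -K)
    (hCmeas : MeasurableSet C) (hKmeas : MeasurableSet K)
    (x : Fin d → ℝ) :
    volume (((fun y => y + x) ⁻¹' C) ∩ K) ≤ volume (C ∩ K) :=
  stmt10_general volume hCconv hKconv hCsym hKsym x
end

section
/- Fernique's theorem: if X is a centered E-valued Gaussian random variable, then there exists β > 0 such that E exp(β‖X‖²) < ∞. -/
open MeasureTheory ProbabilityTheory NNReal

/-!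
After a change on a null set, a strongly measurable random variable takes its values in a separable
subspace. Continuous linear forms on that subspace extend to the whole space by the Hahn–Banach
theorem, so the random variable is Gaussian in the subspace, hence also in the completion of the
subspace. That completion is a separable Banach space, where Fernique's theorem for Gaussian
measures gives the integrability, and the map into it preserves norms.
-/

section

variable {Ω E : Type*} {mΩ : MeasurableSpace Ω} {P : Measure Ω}

lemma hasGaussianLaw_of_forall_dual [TopologicalSpace E] [AddCommMonoid E] [Module ℝ E]
    [MeasurableSpace E] [OpensMeasurableSpace E] {X : Ω → E} (hX : AEMeasurable X P)
    (h : ∀ L : StrongDual ℝ E, HasGaussianLaw (fun ω ↦ L (X ω)) P) : HasGaussianLaw X P where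
  isGaussian_map := isGaussian_of_isGaussian_map fun L ↦ by
    rw [AEMeasurable.map_map_of_aemeasurable (by fun_prop) hX]
    exact (h L).isGaussian_map

lemma hasGaussianLaw_of_forall_dual_coe [AddCommGroup E] [TopologicalSpace E] [Module ℝ E]
    [PolynormableSpace ℝ E] {F : Submodule ℝ E} [MeasurableSpace F] [OpensMeasurableSpace F]
    {Y : Ω → F} (hY : AEMeasurable Y P)
    (h : ∀ L : StrongDual ℝ E, HasGaussianLaw (fun ω ↦ L (Y ω)) P) : HasGaussianLaw Y P := by
  refine hasGaussianLaw_of_forall_dual hY fun L ↦ ?_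
  obtain ⟨L', hL'⟩ := StrongDual.exists_extension F L
  simpa only [hL'] using h L'

lemma exists_integrable_exp_sq_norm_of_hasGaussianLaw [SeminormedAddCommGroup E]
    [NormedSpace ℝ E] [SecondCountableTopology E] [MeasurableSpace E] [OpensMeasurableSpace E]
    {X : Ω → E} (hX : HasGaussianLaw X P) :
    ∃ C : ℝ, 0 < C ∧ Integrable (fun ω ↦ Real.exp (C * ‖X ω‖ ^ 2)) P := by
  borelize (UniformSpace.Completion E)
  have : SecondCountableTopology (UniformSpace.Completion E) :=
    UniformSpace.secondCountable_of_separable _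
  let ι : E →L[ℝ] UniformSpace.Completion E := UniformSpace.Completion.toComplL
  have hιX : HasGaussianLaw (ι ∘ X) P := hX.map_of_measurable ι ι.continuous.measurable
  have := hιX.isGaussian_map
  obtain ⟨C, hC, hint⟩ := IsGaussian.exists_integrable_exp_sq (P.map (ι ∘ X))
  refine ⟨C, hC, ?_⟩
  simpa [ι, Function.comp_def] using hint.comp_aemeasurable hιX.aemeasurable

theorem stmt12_general [SeminormedAddCommGroup E] [NormedSpace ℝ E] {X : Ω → E}
    (hX : AEStronglyMeasurable X P)
    (hXgauss : ∀ L : StrongDual ℝ E, HasGaussianLaw (fun ω ↦ L (X ω)) P) :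
    ∃ C : ℝ, 0 < C ∧ Integrable (fun ω ↦ Real.exp (C * ‖X ω‖ ^ 2)) P := by
  obtain ⟨X', hX', hXX'⟩ := hX
  borelize E
  let F : Submodule ℝ E := Submodule.span ℝ (Set.range X')
  have : TopologicalSpace.SeparableSpace F := (hX'.isSeparable_range.span (R := ℝ)).separableSpace
  have : SecondCountableTopology F := UniformSpace.secondCountable_of_separable F
  let Y : Ω → F := fun ω ↦ ⟨X' ω, Submodule.subset_span (Set.mem_range_self ω)⟩
  have hY : HasGaussianLaw Y P :=
    hasGaussianLaw_of_forall_dual_coe hX'.measurable.subtype_mk.aemeasurable fun L ↦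
      (hXgauss L).congr (hXX'.fun_comp L)
  obtain ⟨C, hC, hint⟩ := exists_integrable_exp_sq_norm_of_hasGaussianLaw hY
  exact ⟨C, hC, hint.congr (hXX'.symm.fun_comp fun x ↦ Real.exp (C * ‖x‖ ^ 2))⟩

end

/-- Fernique's theorem: if `X` is a centered `E`-valued Gaussian random variable,
then `E exp(β‖X‖²) < ∞` for some `β > 0`. -/
theorem stmt12 {Ω E : Type*} [MeasureSpace Ω] [IsProbabilityMeasure (ℙ : Measure Ω)]
    [NormedAddCommGroup E] [NormedSpace ℝ E] [CompleteSpace E]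
    (X : Ω → E) (hXmeas : StronglyMeasurable X)
    (hXgauss : ∀ φ : E →L[ℝ] ℝ, ∃ v : ℝ≥0,
      Measure.map (fun ω => φ (X ω)) ℙ = gaussianReal 0 v) :
    ∃ β : ℝ, 0 < β ∧ Integrable (fun ω => Real.exp (β * ‖X ω‖ ^ 2)) ℙ :=
  stmt12_general hXmeas.aestronglyMeasurable fun φ ↦
    (hXgauss φ).elim fun _ hv ↦ ⟨hv ▸ inferInstance⟩
end

section
/- If X₁ and X₂ are centered E-valued Gaussian random variables with E⟨X₁,x*⟩² ≤ E⟨X₂,x*⟩² for all x* ∈ E*, and φ : E → [0,∞) is lower semicontinuous, convex, and symmetric (φ(−x) = φ(x)), then Eφ(X₁) ≤ Eφ(X₂). -/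
open MeasureTheory ProbabilityTheory NNReal
open scoped ENNReal RealInnerProductSpace

/-! Fix finitely many functionals `l i`. The joint law of the `l i (X₂)` is that of the `l i (X₁)`
convolved with a centered Gaussian law, namely the one whose covariance is the difference of the two
covariances. By Jensen's inequality, adding independent centered noise can only increase the
expectation of the convex function `maxᵢ (l i + c i)⁺`. A lower semicontinuous convex function is,
on a separable subspace, the supremum of countably many affine functions, so the general case
follows by monotone convergence along the finite subfamilies. -/

lemma ofReal_integral_le_lintegral_ofReal {α : Type*} [MeasurableSpace α] {μ : Measure α}
    (f : α → ℝ) : ENNReal.ofReal (∫ x, f x ∂μ) ≤ ∫⁻ x, ENNReal.ofReal (f x) ∂μ := by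
  by_cases hf : Integrable f μ
  · rw [integral_eq_lintegral_pos_part_sub_lintegral_neg_part hf]
    exact ENNReal.ofReal_le_of_le_toReal (sub_le_self _ ENNReal.toReal_nonneg)
  · simp only [integral_undef hf, ENNReal.ofReal_zero, zero_le]

lemma ofReal_eq_iSup_of_isLUB {ι : Type*} [Nonempty ι] {a : ι → ℝ} {b : ℝ}
    (h : IsLUB (Set.range a) b) : ENNReal.ofReal b = ⨆ i, ENNReal.ofReal (a i) := by
  rw [← h.ciSup_eq]
  exact ENNReal.ofReal_mono.map_ciSup_of_continuousAt ENNReal.continuous_ofReal.continuousAt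
    h.bddAbove

lemma exists_nat_affine_isLUB_of_isSeparable {E : Type*} [NormedAddCommGroup E] [NormedSpace ℝ E]
    {s : Set E} (hs : TopologicalSpace.IsSeparable s) {φ : E → ℝ} (hφlsc : LowerSemicontinuous φ)
    (hφconv : ConvexOn ℝ Set.univ φ) :
    ∃ (l : ℕ → StrongDual ℝ E) (c : ℕ → ℝ),
      ∀ x ∈ s, IsLUB (Set.range fun n => l n x + c n) (φ x) := by
  let F := Submodule.span ℝ s
  have : TopologicalSpace.SeparableSpace F := hs.span.separableSpace
  have : SecondCountableTopology F := UniformSpace.secondCountable_of_separable F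
  obtain ⟨l, c, hle, hsup⟩ := ConvexOn.real_univ_sSup_of_nat_affine_eq
    (hφlsc.comp continuous_subtype_val) (hφconv.comp_linearMap F.subtype)
  choose L hL _ using fun n => exists_extension_norm_eq F (l n)
  refine ⟨L, c, fun x hx => ?_⟩
  let y : F := ⟨x, Submodule.subset_span hx⟩
  have hle_y (n : ℕ) : L n x + c n ≤ φ x := by
    rw [hL n y]
    exact hle n y
  have hsup_y : ⨆ n, (L n x + c n) = φ x := by
    simpa [← hL, y] using congrFun hsup y
  exact hsup_y ▸ isLUB_ciSup ⟨φ x, Set.forall_mem_range.2 hle_y⟩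

section Convolution

variable {F : Type*} [NormedAddCommGroup F] [NormedSpace ℝ F] [MeasurableSpace F]
  {μ ν : Measure F}

lemma ofReal_affine_le_lintegral_add [IsProbabilityMeasure ν] {L : StrongDual ℝ F}
    (hL : Integrable L ν) (hL0 : ∫ y, L y ∂ν = 0) (c : ℝ) (x : F) :
    ENNReal.ofReal (L x + c) ≤ ∫⁻ y, ENNReal.ofReal (L (x + y) + c) ∂ν := by
  have hmean : ∫ y, (L (x + y) + c) ∂ν = L x + c := by
    simp_rw [map_add, add_right_comm (L x)]
    rw [integral_add (integrable_const _) hL, hL0]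
    simp
  exact hmean ▸ ofReal_integral_le_lintegral_ofReal _

lemma lintegral_iSup_ofReal_affine_le_conv [BorelSpace F] [SecondCountableTopology F]
    [SFinite μ] [IsProbabilityMeasure ν] {ι : Type*} [Countable ι] {L : ι → StrongDual ℝ F}
    (hL : ∀ i, Integrable (L i) ν) (hL0 : ∀ i, ∫ y, L i y ∂ν = 0) (c : ι → ℝ) :
    ∫⁻ x, ⨆ i, ENNReal.ofReal (L i x + c i) ∂μ
      ≤ ∫⁻ x, ⨆ i, ENNReal.ofReal (L i x + c i) ∂(μ ∗ ν) := by
  rw [Measure.lintegral_conv (by fun_prop)]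
  refine lintegral_mono fun x => iSup_le fun i => ?_
  calc ENNReal.ofReal (L i x + c i)
      ≤ ∫⁻ y, ENNReal.ofReal (L i (x + y) + c i) ∂ν :=
        ofReal_affine_le_lintegral_add (hL i) (hL0 i) (c i) x
    _ ≤ ∫⁻ y, ⨆ i, ENNReal.ofReal (L i (x + y) + c i) ∂ν :=
        lintegral_mono fun y => le_iSup (fun i => ENNReal.ofReal (L i (x + y) + c i)) i

end Convolution

section MultivariateGaussian

variable {ι : Type*} [Fintype ι]

lemma exists_isGaussian_charFun_eq (B : LinearMap.BilinForm ℝ (EuclideanSpace ℝ ι))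
    (hB : B.IsPosSemidef) :
    ∃ ν : Measure (EuclideanSpace ℝ ι), IsGaussian ν ∧ (∫ x, x ∂ν = 0) ∧
      ∀ t, charFun ν t = Complex.exp (-B t t / 2) := by
  classical
  let b := (EuclideanSpace.basisFun ι ℝ).toBasis
  let S := LinearMap.BilinForm.toMatrix b B
  have hS : S.PosSemidef :=
    (LinearMap.isPosSemidef_iff_posSemidef_toMatrix b).1 (LinearMap.BilinForm.isPosSemidef_iff.1 hB)
  refine ⟨multivariateGaussian 0 S, inferInstance, integral_id_multivariateGaussian, fun t => ?_⟩
  have hquad : t.ofLp ⬝ᵥ S.mulVec t.ofLp = B t t :=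
    (B.apply_eq_dotProduct_toMatrix_mulVec b t t).symm
  rw [charFun_multivariateGaussian hS, hquad, inner_zero_right]
  simp [neg_div]

lemma exists_isGaussian_conv_eq {μ₁ μ₂ : Measure (EuclideanSpace ℝ ι)}
    [IsGaussian μ₁] [IsGaussian μ₂]
    (hmean : ∀ L : StrongDual ℝ (EuclideanSpace ℝ ι), μ₁[L] = μ₂[L])
    (hvar : ∀ L : StrongDual ℝ (EuclideanSpace ℝ ι), Var[L; μ₁] ≤ Var[L; μ₂]) :
    ∃ ν : Measure (EuclideanSpace ℝ ι), IsGaussian ν ∧ ∫ x, x ∂ν = 0 ∧ μ₁ ∗ ν = μ₂ := by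
  let B := (covarianceBilin μ₂ - covarianceBilin μ₁).toBilinForm
  have hB_self (t : EuclideanSpace ℝ ι) :
      B t t = Var[fun x => ⟪t, x⟫; μ₂] - Var[fun x => ⟪t, x⟫; μ₁] := by
    simp only [B, ContinuousLinearMap.toBilinForm_apply, sub_apply,
      covarianceBilin_self IsGaussian.memLp_two_id]
  have hB : B.IsPosSemidef := {
    eq x y := by simp [B, covarianceBilin_comm x y]
    nonneg t := by
      rw [hB_self]
      exact sub_nonneg.2 (hvar (innerSL ℝ t)) }
  obtain ⟨ν, hν, hν0, hchar⟩ := exists_isGaussian_charFun_eq B hB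
  refine ⟨ν, hν, hν0, Measure.ext_of_charFun (funext fun t => ?_)⟩
  have hmean_t : μ₁[fun x => ⟪t, x⟫] = μ₂[fun x => ⟪t, x⟫] := hmean (innerSL ℝ t)
  rw [charFun_conv, hchar, IsGaussian.charFun_eq, IsGaussian.charFun_eq, ← Complex.exp_add]
  congr 1
  simp only [integral_complex_ofReal, hmean_t, hB_self, Complex.ofReal_sub]
  ring

end MultivariateGaussian

section Domination

variable {E : Type*} [NormedAddCommGroup E] [NormedSpace ℝ E] [MeasurableSpace E] [BorelSpace E]
  {μ₁ μ₂ : Measure E} [IsGaussian μ₁] [IsGaussian μ₂]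

lemma lintegral_iSup_ofReal_affine_le_of_finite
    (hmean : ∀ L : StrongDual ℝ E, μ₁[L] = μ₂[L])
    (hvar : ∀ L : StrongDual ℝ E, Var[L; μ₁] ≤ Var[L; μ₂])
    {ι : Type*} [Finite ι] (l : ι → StrongDual ℝ E) (c : ι → ℝ) :
    ∫⁻ x, ⨆ i, ENNReal.ofReal (l i x + c i) ∂μ₁
      ≤ ∫⁻ x, ⨆ i, ENNReal.ofReal (l i x + c i) ∂μ₂ := by
  have := Fintype.ofFinite ι
  let T : E →L[ℝ] EuclideanSpace ℝ ι :=
    (EuclideanSpace.equiv ι ℝ).symm.toContinuousLinearMap ∘L ContinuousLinearMap.pi l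
  let G : EuclideanSpace ℝ ι → ℝ≥0∞ :=
    fun v => ⨆ i, ENNReal.ofReal (EuclideanSpace.proj (𝕜 := ℝ) i v + c i)
  have hT : Measurable T := T.continuous.measurable
  have hmap (μ : Measure E) :
      ∫⁻ x, ⨆ i, ENNReal.ofReal (l i x + c i) ∂μ = ∫⁻ v, G v ∂(μ.map T) :=
    (lintegral_map (f := G) (by fun_prop) hT).symm
  obtain ⟨ν, hν, hν0, hconv⟩ := exists_isGaussian_conv_eq (μ₁ := μ₁.map T) (μ₂ := μ₂.map T)
    (fun L => by
      rw [integral_map hT.aemeasurable (by fun_prop), integral_map hT.aemeasurable (by fun_prop)]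
      exact hmean (L ∘L T))
    (fun L => by
      rw [variance_map (by fun_prop) hT.aemeasurable, variance_map (by fun_prop) hT.aemeasurable]
      exact hvar (L ∘L T))
  rw [hmap, hmap, ← hconv]
  refine lintegral_iSup_ofReal_affine_le_conv (fun i => IsGaussian.integrable_dual ν _)
    (fun i => ?_) c
  exact ((EuclideanSpace.proj (𝕜 := ℝ) i).integral_comp_id_comm IsGaussian.integrable_id).trans
    (by rw [hν0, map_zero])

lemma lintegral_iSup_ofReal_affine_le
    (hmean : ∀ L : StrongDual ℝ E, μ₁[L] = μ₂[L])
    (hvar : ∀ L : StrongDual ℝ E, Var[L; μ₁] ≤ Var[L; μ₂])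
    {ι : Type*} [Countable ι] (l : ι → StrongDual ℝ E) (c : ι → ℝ) :
    ∫⁻ x, ⨆ i, ENNReal.ofReal (l i x + c i) ∂μ₁
      ≤ ∫⁻ x, ⨆ i, ENNReal.ofReal (l i x + c i) ∂μ₂ := by
  let g (s : Finset ι) (x : E) : ℝ≥0∞ := ⨆ i ∈ s, ENNReal.ofReal (l i x + c i)
  have hg_mono : Monotone g := fun s t hst x => biSup_mono fun i hi => hst hi
  calc ∫⁻ x, ⨆ i, ENNReal.ofReal (l i x + c i) ∂μ₁
      = ∫⁻ x, ⨆ s, g s x ∂μ₁ := by simp_rw [g, ← iSup_eq_iSup_finset]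
    _ = ⨆ s, ∫⁻ x, g s x ∂μ₁ :=
        lintegral_iSup_directed (fun s => by fun_prop) hg_mono.directed_le
    _ ≤ ∫⁻ x, ⨆ i, ENNReal.ofReal (l i x + c i) ∂μ₂ := iSup_le fun s => ?_
  calc ∫⁻ x, g s x ∂μ₁
      = ∫⁻ x, ⨆ i : s, ENNReal.ofReal (l i x + c i) ∂μ₁ := by simp_rw [g, iSup_subtype']
    _ ≤ ∫⁻ x, ⨆ i : s, ENNReal.ofReal (l i x + c i) ∂μ₂ :=
        lintegral_iSup_ofReal_affine_le_of_finite hmean hvar (fun i : s => l i) (fun i => c i)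
    _ ≤ ∫⁻ x, ⨆ i, ENNReal.ofReal (l i x + c i) ∂μ₂ :=
        lintegral_mono fun x => iSup_comp_le (fun i => ENNReal.ofReal (l i x + c i)) Subtype.val

theorem lintegral_ofReal_convex_le_of_variance_le
    (hmean : ∀ L : StrongDual ℝ E, μ₁[L] = μ₂[L])
    (hvar : ∀ L : StrongDual ℝ E, Var[L; μ₁] ≤ Var[L; μ₂])
    {s : Set E} (hs : TopologicalSpace.IsSeparable s)
    (hμ₁s : ∀ᵐ x ∂μ₁, x ∈ s) (hμ₂s : ∀ᵐ x ∂μ₂, x ∈ s)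
    {φ : E → ℝ} (hφlsc : LowerSemicontinuous φ) (hφconv : ConvexOn ℝ Set.univ φ) :
    ∫⁻ x, ENNReal.ofReal (φ x) ∂μ₁ ≤ ∫⁻ x, ENNReal.ofReal (φ x) ∂μ₂ := by
  obtain ⟨l, c, hlub⟩ := exists_nat_affine_isLUB_of_isSeparable hs hφlsc hφconv
  have hφ (x : E) (hx : x ∈ s) :
      ENNReal.ofReal (φ x) = ⨆ n, ENNReal.ofReal (l n x + c n) :=
    ofReal_eq_iSup_of_isLUB (hlub x hx)
  rw [lintegral_congr_ae (hμ₁s.mono hφ), lintegral_congr_ae (hμ₂s.mono hφ)]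
  exact lintegral_iSup_ofReal_affine_le hmean hvar l c

end Domination

section RandomVectors

variable {Ω E : Type*} {mΩ : MeasurableSpace Ω} {P : Measure Ω}
  [NormedAddCommGroup E] [NormedSpace ℝ E] [MeasurableSpace E] [BorelSpace E] {X : Ω → E}

lemma map_dual_map (hX : AEMeasurable X P) (ψ : StrongDual ℝ E) :
    (P.map X).map ψ = P.map (fun ω => ψ (X ω)) :=
  AEMeasurable.map_map_of_aemeasurable (by fun_prop) hX

lemma isGaussian_map_of_forall_dual (hX : AEMeasurable X P)
    (hgauss : ∀ ψ : StrongDual ℝ E, ∃ a v, P.map (fun ω => ψ (X ω)) = gaussianReal a v) :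
    IsGaussian (P.map X) :=
  isGaussian_of_map_eq_gaussianReal (by simpa only [map_dual_map hX] using hgauss)

lemma integral_map_dual (hX : AEMeasurable X P) {ψ : StrongDual ℝ E} {a : ℝ}
    (hψ : ∃ v, P.map (fun ω => ψ (X ω)) = gaussianReal a v) : (P.map X)[ψ] = a := by
  obtain ⟨v, hv⟩ := hψ
  rw [← integral_id_gaussianReal (μ := a) (v := v), ← hv, ← map_dual_map hX,
    integral_map (φ := ψ) (by fun_prop) (by fun_prop)]

lemma variance_map_dual [IsGaussian (P.map X)] (hX : AEMeasurable X P) (ψ : StrongDual ℝ E) :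
    Var[ψ; P.map X] = ∫ ω, ψ (X ω) ^ 2 ∂P - (P.map X)[ψ] ^ 2 := by
  rw [variance_eq_sub (IsGaussian.memLp_dual _ ψ 2 (by simp)), integral_map hX (by fun_prop)]
  simp only [Pi.pow_apply]

end RandomVectors

/-- For `φ` of varying sign the integrands are the positive part of `φ`. -/
theorem stmt14_general {Ω₁ Ω₂ E : Type*} {mΩ₁ : MeasurableSpace Ω₁} {mΩ₂ : MeasurableSpace Ω₂}
    {P₁ : Measure Ω₁} {P₂ : Measure Ω₂} [NormedAddCommGroup E] [NormedSpace ℝ E]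
    {X₁ : Ω₁ → E} {X₂ : Ω₂ → E}
    (hX₁ : AEStronglyMeasurable X₁ P₁) (hX₂ : AEStronglyMeasurable X₂ P₂)
    {m : StrongDual ℝ E → ℝ}
    (hX₁gauss : ∀ ψ : StrongDual ℝ E, ∃ v, P₁.map (fun ω => ψ (X₁ ω)) = gaussianReal (m ψ) v)
    (hX₂gauss : ∀ ψ : StrongDual ℝ E, ∃ v, P₂.map (fun ω => ψ (X₂ ω)) = gaussianReal (m ψ) v)
    (hdom : ∀ ψ : StrongDual ℝ E, ∫ ω, ψ (X₁ ω) ^ 2 ∂P₁ ≤ ∫ ω, ψ (X₂ ω) ^ 2 ∂P₂)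
    {φ : E → ℝ} (hφlsc : LowerSemicontinuous φ) (hφconv : ConvexOn ℝ Set.univ φ) :
    ∫⁻ ω, ENNReal.ofReal (φ (X₁ ω)) ∂P₁ ≤ ∫⁻ ω, ENNReal.ofReal (φ (X₂ ω)) ∂P₂ := by
  borelize E
  have hX₁m := hX₁.aemeasurable
  have hX₂m := hX₂.aemeasurable
  have := isGaussian_map_of_forall_dual hX₁m fun ψ => ⟨m ψ, hX₁gauss ψ⟩
  have := isGaussian_map_of_forall_dual hX₂m fun ψ => ⟨m ψ, hX₂gauss ψ⟩
  have hmean (ψ : StrongDual ℝ E) : (P₁.map X₁)[ψ] = (P₂.map X₂)[ψ] := by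
    rw [integral_map_dual hX₁m (hX₁gauss ψ), integral_map_dual hX₂m (hX₂gauss ψ)]
  have hvar (ψ : StrongDual ℝ E) : Var[ψ; P₁.map X₁] ≤ Var[ψ; P₂.map X₂] := by
    rw [variance_map_dual hX₁m, variance_map_dual hX₂m, hmean]
    exact sub_le_sub_right (hdom ψ) _
  obtain ⟨s₁, hs₁, hX₁s⟩ := hX₁.isSeparable_ae_range
  obtain ⟨s₂, hs₂, hX₂s⟩ := hX₂.isSeparable_ae_range
  have hφm : Measurable fun x => ENNReal.ofReal (φ x) := hφlsc.measurable.ennreal_ofReal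
  rw [← lintegral_map' hφm.aemeasurable hX₁m, ← lintegral_map' hφm.aemeasurable hX₂m]
  have hs : MeasurableSet (closure (s₁ ∪ s₂)) := isClosed_closure.measurableSet
  refine lintegral_ofReal_convex_le_of_variance_le hmean hvar (hs₁.union hs₂).closure
    ((ae_map_iff hX₁m hs).2 ?_) ((ae_map_iff hX₂m hs).2 ?_) hφlsc hφconv
  · exact hX₁s.mono fun ω hω => subset_closure (Or.inl hω)
  · exact hX₂s.mono fun ω hω => subset_closure (Or.inr hω)

/-- If `X₁`, `X₂` are centered `E`-valued Gaussian random variables whose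
covariances are dominated, and `φ : E → [0,∞)` is lower semicontinuous, convex
and symmetric, then `Eφ(X₁) ≤ Eφ(X₂)`. -/
theorem stmt14 {Ω₁ Ω₂ E : Type*}
    [MeasureSpace Ω₁] [IsProbabilityMeasure (ℙ : Measure Ω₁)]
    [MeasureSpace Ω₂] [IsProbabilityMeasure (ℙ : Measure Ω₂)]
    [NormedAddCommGroup E] [NormedSpace ℝ E] [CompleteSpace E]
    (X₁ : Ω₁ → E) (X₂ : Ω₂ → E)
    (hX₁meas : StronglyMeasurable X₁) (hX₂meas : StronglyMeasurable X₂)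
    (hX₁gauss : ∀ ψ : E →L[ℝ] ℝ, ∃ v : ℝ≥0,
      Measure.map (fun ω => ψ (X₁ ω)) ℙ = gaussianReal 0 v)
    (hX₂gauss : ∀ ψ : E →L[ℝ] ℝ, ∃ v : ℝ≥0,
      Measure.map (fun ω => ψ (X₂ ω)) ℙ = gaussianReal 0 v)
    (hdom : ∀ ψ : E →L[ℝ] ℝ,
      (∫ ω, (ψ (X₁ ω)) ^ 2 ∂ℙ) ≤ ∫ ω, (ψ (X₂ ω)) ^ 2 ∂ℙ)
    (φ : E → ℝ) (hφnonneg : ∀ z, 0 ≤ φ z)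
    (hφlsc : LowerSemicontinuous φ)
    (hφconv : ConvexOn ℝ Set.univ φ)
    (hφsym : ∀ z, φ (-z) = φ z) :
    (∫⁻ ω, ENNReal.ofReal (φ (X₁ ω)) ∂ℙ) ≤ ∫⁻ ω, ENNReal.ofReal (φ (X₂ ω)) ∂ℙ :=
  stmt14_general (m := 0) hX₁meas.aestronglyMeasurable hX₂meas.aestronglyMeasurable
    hX₁gauss hX₂gauss hdom hφlsc hφconv
end
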